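/- The ring of integers O_L = ℤ[ω][θ] of the number field L = ℚ(ω, θ), where ω = e^{2πi/3} and θ = ζ₇ + ζ₇⁻¹ = 2cos(2π/7), is a principal ideal domain. -/

import Mathlib

noncomputable section

open Complex

/-- `ω = e^{2πi/3}`, the primitive cube root of unity. -/
def om : ℂ := Complex.exp (2 * Real.pi * Complex.I / 3)

/-- `θ = ζ₇ + ζ₇⁻¹ = 2cos(2π/7)`. -/
def t7 : ℂ := 2 * Real.cos (2 * Real.pi / 7)

/-- The ring of integers `O_L = ℤ[ω][θ]` of `L = ℚ(ω,θ)`, realized as the subring of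
`ℂ` generated by `ω` and `θ`. -/
def OL7 : Subring ℂ := Subring.closure {om, t7}

open Polynomial NumberField Algebra nonZeroDivisors

noncomputable def cubQ : ℤ[X] := X ^ 3 + C 7 * X ^ 2 + C 14 * X + C 7

lemma cubQ_natDegree : cubQ.natDegree = 3 := by unfold cubQ; compute_degree!
lemma cubQ_monic : cubQ.Monic := by unfold cubQ; monicity!

lemma cubQ_eis : cubQ.IsEisensteinAt (Submodule.span ℤ {(7 : ℤ)}) := by
  refine cubQ_monic.isEisensteinAt_of_mem_of_notMem ?_ ?_ ?_
  · exact Ideal.IsPrime.ne_top <| (Ideal.span_singleton_prime (by norm_num)).2 <| by norm_num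
  · intro n hn
    rw [cubQ_natDegree] at hn
    unfold cubQ
    change _ ∈ Ideal.span {(7:ℤ)}
    rw [Ideal.mem_span_singleton]
    interval_cases n <;> simp [coeff_X, coeff_X_pow]
  · change _ ∉ Ideal.span {(7:ℤ)} ^ 2
    rw [Ideal.span_singleton_pow, Ideal.mem_span_singleton]
    unfold cubQ
    simp [coeff_X, coeff_X_pow]

lemma cubQ_irr : Irreducible cubQ :=
  cubQ_eis.irreducible ((Ideal.span_singleton_prime (by norm_num)).2 <| by norm_num)
    cubQ_monic.isPrimitive (by rw [cubQ_natDegree]; norm_num)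

section
set_option linter.unusedSectionVars false
variable {F : Type*} [Field F] [NumberField F] {x : F}

lemma cub_int (hx : x ^ 3 + 7 * x ^ 2 + 14 * x + 7 = 0) : IsIntegral ℤ x :=
  ⟨cubQ, cubQ_monic, by simp [cubQ, hx]⟩

lemma cub_minpoly (hx : x ^ 3 + 7 * x ^ 2 + 14 * x + 7 = 0) : minpoly ℤ x = cubQ := by
  have h1 : minpoly ℚ x = cubQ.map (algebraMap ℤ ℚ) := by
    symm
    apply minpoly.eq_of_irreducible_of_monic
    · exact (cubQ_monic.irreducible_iff_irreducible_map_fraction_map).1 cubQ_irr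
    · rw [aeval_map_algebraMap]; simp only [cubQ, map_add, map_mul, map_pow, aeval_X, aeval_C]; simp [hx]
    · exact cubQ_monic.map _
  rw [minpoly.isIntegrallyClosed_eq_field_fractions' ℚ (cub_int hx)] at h1
  exact map_injective (algebraMap ℤ ℚ) (algebraMap ℤ ℚ).injective_int h1

lemma cub_minpolyQ (hx : x ^ 3 + 7 * x ^ 2 + 14 * x + 7 = 0) :
    minpoly ℚ x = cubQ.map (algebraMap ℤ ℚ) := by
  rw [minpoly.isIntegrallyClosed_eq_field_fractions' ℚ (cub_int hx), cub_minpoly hx]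

lemma norm_unit_sq {u v : F} (hu : IsIntegral ℤ u) (hv : IsIntegral ℤ v) (huv : u * v = 1) :
    Algebra.norm ℚ u = 1 ∨ Algebra.norm ℚ u = -1 := by
  obtain ⟨a, ha⟩ := IsIntegrallyClosed.isIntegral_iff.1 (Algebra.isIntegral_norm ℚ hu)
  obtain ⟨b, hb⟩ := IsIntegrallyClosed.isIntegral_iff.1 (Algebra.isIntegral_norm ℚ hv)
  have h : Algebra.norm ℚ u * Algebra.norm ℚ v = 1 := by rw [← map_mul, huv, map_one]
  rw [← ha, ← hb, ← map_mul, ← map_one (algebraMap ℤ ℚ)] at h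
  have h' := (algebraMap ℤ ℚ).injective_int h
  rcases Int.isUnit_iff.1 (IsUnit.of_mul_eq_one _ h') with h | h
  · left; rw [← ha, h]; simp
  · right; rw [← ha, h]; simp

lemma cub_discr (hx : x ^ 3 + 7 * x ^ 2 + 14 * x + 7 = 0) (B : PowerBasis ℚ F) (hB : B.gen = x) :
    Algebra.discr ℚ B.basis = 49 ∨ Algebra.discr ℚ B.basis = -49 := by
  have hd : B.dim = 3 := by
    rw [← B.natDegree_minpoly, hB, cub_minpolyQ hx, natDegree_map_eq_of_injective, cubQ_natDegree]
    exact (algebraMap ℤ ℚ).injective_int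
  have hn : Algebra.norm ℚ x = -7 := by
    rw [← hB, PowerBasis.norm_gen_eq_coeff_zero_minpoly, hd, hB, cub_minpolyQ hx]
    simp [cubQ]; norm_num
  have hint := cub_int hx
  have hI (n : ℤ) : IsIntegral ℤ (n : F) := isIntegral_algebraMap (x := n)
  have hu : IsIntegral ℤ (1 + 4 * (x + 2) + 2 * (x + 2) ^ 2) := by
    have := ((hI 17).add ((hI 12).mul hint)).add ((hI 2).mul (hint.pow 2))
    convert! this using 1; push_cast; ring
  have hv : IsIntegral ℤ (-3 + 2 * (x + 2) ^ 2) := by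
    have := ((hI 5).add ((hI 8).mul hint)).add ((hI 2).mul (hint.pow 2))
    convert! this using 1; push_cast; ring
  have h := norm_unit_sq hu hv (by linear_combination (4 * x + 12) * hx)
  have hder : aeval B.gen (derivative (minpoly ℚ B.gen)) =
      x ^ 2 * (1 + 4 * (x + 2) + 2 * (x + 2) ^ 2) := by
    rw [hB, cub_minpolyQ hx]
    rw [derivative_map, aeval_map_algebraMap]
    simp only [cubQ, derivative_add, derivative_mul, derivative_X_pow, derivative_C, derivative_X, map_add, map_mul, map_pow, aeval_X, aeval_C, map_zero, map_one]
    simp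
    linear_combination (-2 * x + 2) * hx
  rw [discr_powerBasis_eq_norm, hder, map_mul, map_pow, hn]
  have : (-1 : ℚ) ^ (Module.finrank ℚ F * (Module.finrank ℚ F - 1) / 2) = 1 ∨
    (-1 : ℚ) ^ (Module.finrank ℚ F * (Module.finrank ℚ F - 1) / 2) = -1 := neg_one_pow_eq_or ..
  rcases this with h1 | h1 <;> rcases h with h2 | h2 <;> rw [h1, h2] <;> norm_num

lemma cub_adjoin (hx : x ^ 3 + 7 * x ^ 2 + 14 * x + 7 = 0) (B : PowerBasis ℚ F) (hB : B.gen = x)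
    (z : F) (hz : IsIntegral ℤ z) : z ∈ adjoin ℤ {x} := by
  have hint : IsIntegral ℤ B.gen := hB ▸ cub_int hx
  have H := discr_mul_isIntegral_mem_adjoin ℚ hint hz
  rw [← hB]
  refine mem_adjoin_of_smul_prime_pow_smul_of_minpoly_isEisensteinAt (n := 2) (p := (7 : ℤ))
    (by norm_num) hint hz ?_ (by rw [hB, cub_minpoly hx]; exact cubQ_eis)
  rcases cub_discr hx B hB with h | h <;> rw [h] at H
  · convert H using 1
    simp [Algebra.smul_def]
  · convert neg_mem H using 1
    simp [Algebra.smul_def]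

lemma cub_adjoin_top {y : 𝓞 F} (hx : (y : F) ^ 3 + 7 * (y : F) ^ 2 + 14 * y + 7 = 0) (B : PowerBasis ℚ F)
    (hB : B.gen = y) : adjoin ℤ {y} = ⊤ := by
  rw [Algebra.eq_top_iff]
  intro (z : 𝓞 F)
  have := cub_adjoin hx B hB z z.isIntegral_coe
  have h2 : (adjoin ℤ {y}).map (IsScalarTower.toAlgHom ℤ (𝓞 F) F)
      = adjoin ℤ {(y : F)} := by
    rw [AlgHom.map_adjoin]; simp
  rw [← h2] at this
  obtain ⟨w, hw, hwz⟩ := this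
  have : w = z := RingOfIntegers.coe_injective hwz
  exact this ▸ hw

lemma cub_discrF {y : 𝓞 F} (hx : (y : F) ^ 3 + 7 * (y : F) ^ 2 + 14 * y + 7 = 0) (B : PowerBasis ℚ F)
    (hB : B.gen = y) : (NumberField.discr F).natAbs = 49 := by
  let pB₁ : PowerBasis ℤ (𝓞 F) := PowerBasis.ofAdjoinEqTop' (RingOfIntegers.isIntegral _)
    (cub_adjoin_top hx B hB)
  have hg : pB₁.gen = y := PowerBasis.ofAdjoinEqTop'_gen _ _
  have key : ((NumberField.discr F : ℤ) : ℚ) = Algebra.discr ℚ B.basis := by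
    change algebraMap ℤ ℚ _ = _
    rw [← NumberField.discr_eq_discr _ pB₁.basis, ← Algebra.discr_localizationLocalization ℤ ℤ⁰ F]
    have : pB₁.dim = B.dim := by
      rw [← PowerBasis.finrank, ← PowerBasis.finrank]
      exact RingOfIntegers.rank F
    rw [← Algebra.discr_reindex _ _ (finCongr this)]
    congr 1
    ext i
    simp [Module.Basis.localizationLocalization_apply, hg, hB]
  rcases cub_discr hx B hB with h | h <;> rw [h] at key
  · have : NumberField.discr F = 49 := by exact_mod_cast key
    simp [this]
  · have : NumberField.discr F = -49 := by exact_mod_cast key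
    simp [this]
end

lemma small_field {k : Type*} [Field k] [Finite k] (hq : Nat.card k ≤ 8) {a b : k}
    (ha : a ^ 2 + a + 1 = 0) (hb : b ^ 3 + 7 * b ^ 2 + 14 * b + 7 = 0) : (7 : k) = 0 := by
  have := Fintype.ofFinite k
  rw [Nat.card_eq_fintype_card] at hq
  have h1 : 1 < Fintype.card k := Fintype.one_lt_card
  have hA := FiniteField.pow_card a
  have hB := FiniteField.pow_card b
  have h0 : ((Fintype.card k : ℕ) : k) = 0 := Nat.cast_card_eq_zero k
  have hpp := FiniteField.isPrimePow_card k
  generalize Fintype.card k = q at *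
  interval_cases q
  · exfalso; norm_num at h0; grind
  · exfalso
    norm_num at h0
    have hr : (203 : k) = 0 := by
      linear_combination ((29) * b ^ 0 + (105) * b ^ 1 + (-127) * b ^ 2) * hb + ((1141) * b ^ 0 + (784) * b ^ 1 + (127) * b ^ 2) * hB
    exact one_ne_zero (α := k) (by linear_combination (2) * hr + (-135) * h0)
  · exfalso
    have h0 : (2 : k) = 0 := by
      have : (2 : k) * 2 = 0 := by norm_num at h0 ⊢; exact h0
      simpa using this
    have hr : (8729 : k) = 0 := by
      linear_combination ((1247) * b ^ 0 + (-441) * b ^ 1 + (980) * b ^ 2 + (-1485) * b ^ 3) * hb + ((14371) * b ^ 0 + (9415) * b ^ 1 + (1485) * b ^ 2) * hB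
    exact one_ne_zero (α := k) (by linear_combination (1) * hr + (-4364) * h0)
  · exfalso
    norm_num at h0
    have hr : (2639 : k) = 0 := by
      linear_combination ((377) * b ^ 0 + (581) * b ^ 1 + (-637) * b ^ 2 + (784) * b ^ 3 + (-1014) * b ^ 4) * hb + ((9345) * b ^ 0 + (6314) * b ^ 1 + (1014) * b ^ 2) * hB
    exact one_ne_zero (α := k) (by linear_combination (4) * hr + (-2111) * h0)
  · exact absurd hpp (by
      rw [isPrimePow_iff_card_primeFactors_eq_one]; decide +kernel)
  · exact_mod_cast h0
  · exfalso
    have h0 : (2 : k) = 0 := by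
      have : (2 : k) * 2 * 2 = 0 := by norm_num at h0 ⊢; exact h0
      simpa using this
    grind

lemma prime7 {R : Type*} [CommRing R] {w x : R} (hw : w ^ 2 + w + 1 = 0)
    (hx : x ^ 3 + 7 * x ^ 2 + 14 * x + 7 = 0) (hgen : adjoin ℤ {w, x} = ⊤) (P : Ideal R)
    [hP : P.IsPrime] (h7 : (7 : R) ∈ P) (hw2 : w - 2 ∈ P) (hxP : x ∈ P) :
    P = Ideal.span {x + 2 - w} := by
  have d7 : 7 ∈ Ideal.span {x + 2 - w} := by
    rw [Ideal.mem_span_singleton]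
    refine ⟨6 + (x + 2) - 2 * (x + 2) ^ 2 + w * (9 - 2 * (x + 2) - 3 * (x + 2) ^ 2), ?_⟩
    grind
  have dx : x ∈ Ideal.span {x + 2 - w} := by
    rw [Ideal.mem_span_singleton]
    refine ⟨-2 + (x + 2) ^ 2 + w * (-3 + (x + 2) + (x + 2) ^ 2), ?_⟩
    grind
  have dw : w - 2 ∈ Ideal.span {x + 2 - w} := by
    rw [Ideal.mem_span_singleton]
    refine ⟨-3 + (x + 2) ^ 2 + w * (-3 + (x + 2) + (x + 2) ^ 2), ?_⟩
    grind
  apply le_antisymm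
  · intro z hz
    set J := Ideal.span {x + 2 - w} with hJ
    have key : ∀ z : R, ∃ n : ℤ, z - n ∈ J := by
      intro z
      have hz : z ∈ adjoin ℤ {w, x} := hgen ▸ Algebra.mem_top
      induction hz using Algebra.adjoin_induction with
      | mem y hy =>
        rcases hy with rfl | rfl
        · exact ⟨2, by simpa using dw⟩
        · exact ⟨0, by simpa using dx⟩
      | algebraMap r => exact ⟨r, by simp⟩
      | add a b _ _ ha hb =>
        obtain ⟨m, hm⟩ := ha
        obtain ⟨n, hn⟩ := hb
        refine ⟨m + n, ?_⟩
        have := J.add_mem hm hn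
        convert! this using 1; push_cast; ring
      | mul a b _ _ ha hb =>
        obtain ⟨m, hm⟩ := ha
        obtain ⟨n, hn⟩ := hb
        refine ⟨m * n, ?_⟩
        have := J.add_mem (J.mul_mem_left b hm) (J.mul_mem_left (m : R) hn)
        convert! this using 1; push_cast; ring
    have hJP : J ≤ P := by
      rw [hJ, Ideal.span_singleton_le_iff_mem]
      have := P.sub_mem hxP hw2
      convert! this using 1; ring
    obtain ⟨n, hn⟩ := key z
    have hnP : (n : R) ∈ P := by
      have := P.sub_mem hz (hJP hn); simpa using this
    have h7n : (7 : ℤ) ∣ n := by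
      by_contra hnd
      obtain ⟨u, v, huv⟩ := ((Prime.coprime_iff_not_dvd (by norm_num : Prime (7 : ℤ))).2 hnd)
      apply hP.ne_top
      rw [Ideal.eq_top_iff_one]
      have := P.add_mem (P.mul_mem_left (u : R) h7) (P.mul_mem_left (v : R) hnP)
      have h2 : (u : R) * 7 + v * n = 1 := by exact_mod_cast congrArg (Int.cast (R := R)) huv
      rwa [h2] at this
    obtain ⟨c, rfl⟩ := h7n
    have := J.add_mem hn (J.mul_mem_left (c : R) d7)
    convert! this using 1; push_cast; ring
  · rw [Ideal.span_singleton_le_iff_mem]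
    have := P.sub_mem hxP hw2
    convert! this using 1; ring

lemma small_prime {K : Type*} [Field K] [NumberField K] {w x : 𝓞 K} (hw : w ^ 2 + w + 1 = 0)
    (hx : x ^ 3 + 7 * x ^ 2 + 14 * x + 7 = 0) (hgen : adjoin ℤ {w, x} = ⊤) (P : Ideal (𝓞 K))
    [hP : P.IsPrime] (hP0 : P ≠ ⊥) (hn : Ideal.absNorm P ≤ 8) : Submodule.IsPrincipal P := by
  have hmax : P.IsMaximal := hP.isMaximal hP0
  let _ : Field (𝓞 K ⧸ P) := Ideal.Quotient.field P
  have : Finite (𝓞 K ⧸ P) := Ideal.finiteQuotientOfFreeOfNeBot P hP0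
  have hcard : Nat.card (𝓞 K ⧸ P) ≤ 8 := by
    rw [Ideal.absNorm_apply, Submodule.cardQuot_apply] at hn; exact hn
  have h7 : (7 : 𝓞 K) ∈ P := by
    have := small_field hcard (a := Ideal.Quotient.mk P w) (b := Ideal.Quotient.mk P x)
      (by rw [← map_pow, ← map_add, ← map_one (Ideal.Quotient.mk P), ← map_add, hw, map_zero])
      (by simpa only [map_add, map_mul, map_pow, map_ofNat, map_zero] using
        congrArg (Ideal.Quotient.mk P) hx)
    rw [← Ideal.Quotient.eq_zero_iff_mem]
    rw [map_ofNat]; exact this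
  have hxP : x ∈ P := by
    apply hP.mem_of_pow_mem 3
    have := P.mul_mem_left (-(x ^ 2 + 2 * x + 1)) h7
    convert! this using 1; linear_combination hx
  have h24 : (w - 2) * (w - 4) ∈ P := by
    have := P.mul_mem_left (-w + 1) h7
    convert! this using 1; linear_combination hw
  rcases hP.mem_or_mem h24 with h | h
  · exact ⟨_, prime7 hw hx hgen P h7 h hxP⟩
  · refine ⟨_, prime7 (w := -1 - w) (by linear_combination hw) hx ?_ P h7 ?_ hxP⟩
    · rw [← top_le_iff, ← hgen]
      apply Algebra.adjoin_le
      rintro y (hy | hy)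
      · rw [hy]
        have h1 : -1 - w ∈ adjoin ℤ {-1 - w, x} := Algebra.subset_adjoin (by simp)
        have := sub_mem (neg_mem (one_mem (adjoin ℤ {-1 - w, x}))) h1
        simpa using this
      · rw [hy]; exact Algebra.subset_adjoin (by simp)
    · have := P.sub_mem (P.neg_mem h) h7
      convert! this using 1; ring

section
variable {K : Type*} [Field K] [NumberField K]

open IntermediateField in
lemma main_struct {w x : K} (hw : IsPrimitiveRoot w 3)
    (hx : x ^ 3 + 7 * x ^ 2 + 14 * x + 7 = 0) (htop : ℚ⟮w⟯ ⊔ ℚ⟮x⟯ = ⊤)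
    {w' x' : 𝓞 K} (hw' : (w' : K) = w) (hx' : (x' : K) = x) :
    Algebra.adjoin ℤ {w', x'} = ⊤ ∧ (NumberField.discr K).natAbs = 64827 ∧ Module.finrank ℚ K = 6 := by
  have hcyc : IsCyclotomicExtension {3} ℚ ℚ⟮w⟯ :=
    hw.intermediateField_adjoin_isCyclotomicExtension ℚ
  have hζ₁ : IsPrimitiveRoot (AdjoinSimple.gen ℚ w) 3 :=
    IsPrimitiveRoot.coe_submonoidClass_iff.mp hw
  have hgal : IsGalois ℚ ℚ⟮w⟯ := IsCyclotomicExtension.isGalois {3} ℚ _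
  have hd1 : (NumberField.discr ℚ⟮w⟯).natAbs = 3 := by
    have : Fact (Nat.Prime 3) := ⟨Nat.prime_three⟩
    rw [IsCyclotomicExtension.Rat.discr_prime 3]; decide
  have hf1 : Module.finrank ℚ ℚ⟮w⟯ = 2 := by
    rw [IsCyclotomicExtension.Rat.finrank 3]; decide
  have hxi : IsIntegral ℚ x := Algebra.IsIntegral.isIntegral x
  have hxx : (AdjoinSimple.gen ℚ x) ^ 3 + 7 * (AdjoinSimple.gen ℚ x) ^ 2 +
      14 * (AdjoinSimple.gen ℚ x) + 7 = 0 := by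
    apply (algebraMap ℚ⟮x⟯ K).injective
    simpa only [map_add, map_mul, map_pow, map_ofNat, map_zero, AdjoinSimple.algebraMap_gen]
      using hx
  let B := IntermediateField.adjoin.powerBasis hxi
  have hB : B.gen = AdjoinSimple.gen ℚ x := IntermediateField.adjoin.powerBasis_gen hxi
  obtain ⟨y, hy⟩ : ∃ y : 𝓞 ℚ⟮x⟯, (y : ℚ⟮x⟯) = AdjoinSimple.gen ℚ x := ⟨⟨_, cub_int hxx⟩, rfl⟩
  rw [← hy] at hxx hB
  have hd2 := cub_discrF hxx B hB
  have ha2 := cub_adjoin_top hxx B hB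
  have hf2 : Module.finrank ℚ ℚ⟮x⟯ = 3 := by
    rw [IntermediateField.adjoin.finrank hxi, cub_minpolyQ hx, natDegree_map_eq_of_injective, cubQ_natDegree]
    exact (algebraMap ℤ ℚ).injective_int
  have hcop : IsCoprime (NumberField.discr ℚ⟮w⟯) (NumberField.discr ℚ⟮x⟯) := by
    rw [Int.isCoprime_iff_nat_coprime, hd1, hd2]; decide
  have hdisj : ℚ⟮w⟯.LinearDisjoint ℚ⟮x⟯ := linearDisjoint_of_isGalois_isCoprime_discr _ _ _ hcop
  have hdiff := isCoprime_differentIdeal_of_isCoprime_discr K hcop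
  refine ⟨?_, ?_, ?_⟩
  · rw [← IsDedekindDomain.adjoin_union_eq_top_of_isCoprime_differentialIdeal ℤ (𝓞 K) (𝓞 ℚ⟮w⟯)
      (𝓞 ℚ⟮x⟯) hdisj ?_ hdiff
      (IsCyclotomicExtension.Rat.adjoin_singleton_eq_top hζ₁) ha2,
      Set.image_singleton, Set.image_singleton, Set.singleton_union]
    · congr 2
      · apply RingOfIntegers.coe_injective
        exact hw'.trans rfl
      · congr 1
        apply RingOfIntegers.coe_injective
        refine hx'.trans ?_
        change _ = algebraMap ℚ⟮x⟯ K y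
        rw [hy]; rfl
    · rw [← sup_toSubalgebra_of_left, htop, top_toSubalgebra]
  · rw [natAbs_discr_eq_natAbs_discr_pow_mul_natAbs_discr_pow K _ _ hdisj htop hdiff, hd1, hd2,
      hf1, hf2]; norm_num
  · have := hdisj.finrank_sup
    rw [htop, finrank_top', hf1, hf2] at this
    exact this

open InfinitePlace in
lemma mink (hd : (NumberField.discr K).natAbs = 64827) (hf : Module.finrank ℚ K = 6) :
    (4 / Real.pi) ^ nrComplexPlaces K * ((Module.finrank ℚ K).factorial /
      (Module.finrank ℚ K : ℝ) ^ (Module.finrank ℚ K) * √|(NumberField.discr K : ℝ)|) < 9 := by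
  have hr : nrComplexPlaces K ≤ 3 := by
    have := card_add_two_mul_card_eq_rank K
    omega
  have habs : |(NumberField.discr K : ℝ)| = 64827 := by
    rw [← Int.cast_abs, Int.abs_eq_natAbs, hd]; norm_num
  rw [habs, hf]
  have hpi := Real.pi_gt_d2
  have h1 : 1 ≤ 4 / Real.pi := by
    rw [le_div_iff₀ Real.pi_pos]; linarith [Real.pi_le_four]
  have h2 : 4 / Real.pi ≤ 4 / 3.14 := by gcongr
  have h3 : (4 / Real.pi) ^ nrComplexPlaces K ≤ (4 / 3.14) ^ 3 :=
    (pow_le_pow_right₀ h1 hr).trans (by gcongr)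
  have h4 : √(64827 : ℝ) ≤ 255 := by
    rw [Real.sqrt_le_left (by norm_num)]; norm_num
  calc _ ≤ (4 / 3.14 : ℝ) ^ 3 * (((6 : ℕ).factorial : ℝ) / ((6 : ℕ) : ℝ) ^ 6 * 255) := by gcongr
    _ < 9 := by norm_num [Nat.factorial]

open IntermediateField in
lemma main_pid {w x : K} (hw : IsPrimitiveRoot w 3)
    (hx : x ^ 3 + 7 * x ^ 2 + 14 * x + 7 = 0) (htop : ℚ⟮w⟯ ⊔ ℚ⟮x⟯ = ⊤)
    {w' x' : 𝓞 K} (hw' : (w' : K) = w) (hx' : (x' : K) = x) :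
    Algebra.adjoin ℤ {w', x'} = ⊤ ∧ IsPrincipalIdealRing (𝓞 K) := by
  obtain ⟨hgen, hd, hf⟩ := main_struct hw hx htop hw' hx'
  refine ⟨hgen, ?_⟩
  have hw2 : w' ^ 2 + w' + 1 = 0 := by
    apply RingOfIntegers.coe_injective
    have := hw.geom_sum_eq_zero (by norm_num)
    simp only [Finset.sum_range_succ, Finset.sum_range_zero] at this
    simp only [map_add, map_pow, map_one, map_zero, hw']
    linear_combination this
  have hx2 : x' ^ 3 + 7 * x' ^ 2 + 14 * x' + 7 = 0 := by
    apply RingOfIntegers.coe_injective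
    simp only [map_add, map_mul, map_pow, map_ofNat, map_zero, hx']
    exact hx
  apply RingOfIntegers.isPrincipalIdealRing_of_isPrincipal_of_norm_le_of_isPrime
  intro I hI hle
  have : (Ideal.absNorm (I : Ideal (𝓞 K)) : ℝ) < 9 := hle.trans_lt (mink hd hf)
  have h8 : Ideal.absNorm (I : Ideal (𝓞 K)) < 9 := by exact_mod_cast this
  exact small_prime hw2 hx2 hgen I (nonZeroDivisors.coe_ne_zero I) (by omega)
end

lemma om_prim : IsPrimitiveRoot om 3 := by
  have := Complex.isPrimitiveRoot_exp 3 (by norm_num)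
  simpa [om] using this

lemma t7_rel : (t7 - 2) ^ 3 + 7 * (t7 - 2) ^ 2 + 14 * (t7 - 2) + 7 = 0 := by
  have h := Complex.isPrimitiveRoot_exp 7 (by norm_num)
  set z := Complex.exp (2 * Real.pi * Complex.I / (7 : ℕ)) with hz
  have hz0 : z ≠ 0 := Complex.exp_ne_zero _
  have ht : t7 = z + z⁻¹ := by
    rw [hz, ← Complex.exp_neg, t7, Complex.ofReal_cos, Complex.two_cos]
    push_cast
    congr 2 <;> ring
  have hs := h.geom_sum_eq_zero (by norm_num)
  simp only [Finset.sum_range_succ, Finset.sum_range_zero] at hs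
  rw [ht]
  field_simp
  linear_combination hs

/-- The ring of integers `O_L = ℤ[ω][θ]` of the number field `L = ℚ(ω, θ)`, where
`ω = e^{2πi/3}` and `θ = 2cos(2π/7)`, is a principal ideal domain. -/
theorem stmt16 : IsPrincipalIdealRing ↥OL7 := by
  have hwi : IsIntegral ℚ om := (om_prim.isIntegral (by norm_num)).tower_top
  have hti : IsIntegral ℚ (t7 - 2) := by
    refine IsIntegral.tower_top (R := ℤ) ?_
    exact ⟨cubQ, cubQ_monic, by simp [cubQ, t7_rel]⟩
  let K : IntermediateField ℚ ℂ := IntermediateField.adjoin ℚ {om, t7 - 2}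
  have : FiniteDimensional ℚ K := by
    apply IntermediateField.finiteDimensional_adjoin
    rintro x (rfl | rfl)
    exacts [hwi, hti]
  have : NumberField K := ⟨⟩
  let w : K := ⟨om, IntermediateField.subset_adjoin _ _ (by simp)⟩
  let x : K := ⟨t7 - 2, IntermediateField.subset_adjoin _ _ (by simp)⟩
  have hw : IsPrimitiveRoot w 3 := IsPrimitiveRoot.coe_submonoidClass_iff.mp om_prim
  have hx : x ^ 3 + 7 * x ^ 2 + 14 * x + 7 = 0 := by
    apply (algebraMap K ℂ).injective
    simp only [map_add, map_mul, map_pow, map_ofNat, map_zero]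
    exact t7_rel
  have htop : IntermediateField.adjoin ℚ {w} ⊔ IntermediateField.adjoin ℚ {x} = ⊤ := by
    rw [_root_.eq_top_iff]
    rintro ⟨z, hz⟩ -
    induction hz using IntermediateField.adjoin_induction with
    | mem y hy =>
      rcases hy with rfl | rfl
      · exact (le_sup_left : _ ≤ IntermediateField.adjoin ℚ {w} ⊔ IntermediateField.adjoin ℚ {x})
          (IntermediateField.mem_adjoin_simple_self ℚ w)
      · exact (le_sup_right : _ ≤ IntermediateField.adjoin ℚ {w} ⊔ IntermediateField.adjoin ℚ {x})
          (IntermediateField.mem_adjoin_simple_self ℚ x)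
    | algebraMap r =>
      have h := (IntermediateField.adjoin ℚ {w} ⊔ IntermediateField.adjoin ℚ {x}).algebraMap_mem r
      convert h using 1
      apply Subtype.ext
      simp
    | add a b _ _ ha hb => exact add_mem ha hb
    | inv a _ ha => exact inv_mem ha
    | mul a b _ _ ha hb => exact mul_mem ha hb
  obtain ⟨w', hw'⟩ : ∃ w' : 𝓞 K, (w' : K) = w := ⟨⟨w, hw.isIntegral (by norm_num)⟩, rfl⟩
  obtain ⟨x', hx'⟩ : ∃ x' : 𝓞 K, (x' : K) = x := ⟨⟨x, cub_int hx⟩, rfl⟩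
  obtain ⟨hgen, hpid⟩ := main_pid hw hx htop hw' hx'
  let f : 𝓞 K →+* ℂ := (algebraMap K ℂ).comp (algebraMap (𝓞 K) K)
  have hfw : f w' = om := by change algebraMap K ℂ (w' : K) = _; rw [hw']; rfl
  have hfx : f x' = t7 - 2 := by change algebraMap K ℂ (x' : K) = _; rw [hx']; rfl
  have hom : om ∈ OL7 := Subring.subset_closure (by simp)
  have ht7 : t7 ∈ OL7 := Subring.subset_closure (by simp)
  have hr : f.range = OL7 := by
    apply le_antisymm
    · rintro _ ⟨z, rfl⟩
      have hz : z ∈ Algebra.adjoin ℤ {w', x'} := hgen ▸ Algebra.mem_top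
      induction hz using Algebra.adjoin_induction with
      | mem y hy =>
        rcases hy with rfl | rfl
        · rw [hfw]; exact hom
        · rw [hfx]; exact sub_mem ht7 (ofNat_mem _ 2)
      | algebraMap r => simp
      | add a b _ _ ha hb => rw [map_add]; exact add_mem ha hb
      | mul a b _ _ ha hb => rw [map_mul]; exact mul_mem ha hb
    · refine Subring.closure_le.2 ?_
      rintro y (rfl | rfl)
      · exact ⟨w', hfw⟩
      · exact ⟨x' + 2, by rw [map_add, hfx, map_ofNat]; ring⟩
  rw [← hr]
  exact IsPrincipalIdealRing.of_surjective f.rangeRestrict f.rangeRestrict_surjective
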